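/- arXiv:2408.05741 — 2 statements merged into one kernel-verified Lean document; each statement's English description precedes it below -/
import Mathlib

section
/- Let n jobs be given, where job j has processing time p_j ∈ ℕ, weight w_j ∈ ℕ and deadline d̃_j ∈ ℕ. For J ⊆ {1,…,n} and t ∈ ℕ, define OPT[J,t] ∈ ℕ∞ as the minimum of ∑_{j∈J} w_j·C_j(π) over all linear orderings π of J processed consecutively without idle time starting at time t, subject to C_j(π) ≤ d̃_j for every j ∈ J (∞ if no feasible ordering, and OPT[∅,t] = 0). Then for every J ⊆ {1,…,n} of even cardinality and every t ∈ ℕ, OPT[J,t] = min over all X ⊆ J with |X| = |J|/2 of ( OPT[X, t] + OPT[J∖X, t + p(X)] ), where p(X) = ∑_{k∈X} p_k. -/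
/-- Total weighted completion time of the jobs in the list, processed consecutively
without idle time starting at time `t`, in the order given by the list. -/
def wcCost {n : ℕ} (p w : Fin n → ℕ) : ℕ → List (Fin n) → ℕ
  | _, [] => 0
  | t, j :: l => w j * (t + p j) + wcCost p w (t + p j) l

/-- Every job of the list meets its deadline when the jobs are processed consecutively
without idle time starting at time `t`. -/
def deadlineFeasible {n : ℕ} (p d : Fin n → ℕ) : ℕ → List (Fin n) → Prop
  | _, [] => True
  | t, j :: l => t + p j ≤ d j ∧ deadlineFeasible p d (t + p j) l

/-- `OPT p w d J t` : minimum of `∑_{j ∈ J} w j * C j` over all orderings of `J`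
processed consecutively without idle time starting at time `t`, subject to the
deadline constraints (`⊤` if no feasible ordering exists). -/
noncomputable def OPT {n : ℕ} (p w d : Fin n → ℕ) (J : Finset (Fin n)) (t : ℕ) : ℕ∞ :=
  sInf { v : ℕ∞ | ∃ l : List (Fin n), l.Nodup ∧ l.toFinset = J ∧
    deadlineFeasible p d t l ∧ v = (wcCost p w t l : ℕ∞) }

theorem wcCost_append {n : ℕ} (p w : Fin n → ℕ) (t : ℕ) (l₁ l₂ : List (Fin n)) :
    wcCost p w t (l₁ ++ l₂) = wcCost p w t l₁ + wcCost p w (t + (l₁.map p).sum) l₂ := by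
  induction l₁ generalizing t with
  | nil => simp [wcCost]
  | cons j l ih => simp [wcCost, ih, add_assoc]

theorem deadlineFeasible_append {n : ℕ} (p d : Fin n → ℕ) (t : ℕ) (l₁ l₂ : List (Fin n)) :
    deadlineFeasible p d t (l₁ ++ l₂) ↔
      deadlineFeasible p d t l₁ ∧ deadlineFeasible p d (t + (l₁.map p).sum) l₂ := by
  induction l₁ generalizing t with
  | nil => simp [deadlineFeasible]
  | cons j l ih => simp [deadlineFeasible, ih, add_assoc, and_assoc]

theorem OPT_le_wcCost {n : ℕ} (p w d : Fin n → ℕ) {t : ℕ} {l : List (Fin n)}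
    (hl : l.Nodup) (hd : deadlineFeasible p d t l) :
    OPT p w d l.toFinset t ≤ wcCost p w t l :=
  sInf_le ⟨l, hl, rfl, hd, rfl⟩

/-- A finite optimal value is attained by a feasible ordering. -/
theorem exists_wcCost_eq_OPT {n : ℕ} {p w d : Fin n → ℕ} {J : Finset (Fin n)} {t : ℕ}
    (h : OPT p w d J t ≠ ⊤) :
    ∃ l : List (Fin n), l.Nodup ∧ l.toFinset = J ∧
      deadlineFeasible p d t l ∧ OPT p w d J t = wcCost p w t l := by
  refine csInf_mem (s := { v : ℕ∞ | ∃ l : List (Fin n), l.Nodup ∧ l.toFinset = J ∧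
    deadlineFeasible p d t l ∧ v = (wcCost p w t l : ℕ∞) }) ?_
  rw [Set.nonempty_iff_ne_empty]
  intro he
  exact h (by rw [OPT, he, sInf_empty])

/-- Concatenating an ordering of `X` with an ordering of `J \ X` gives an ordering of `J`. -/
theorem OPT_le_add {n : ℕ} (p w d : Fin n → ℕ) {J X : Finset (Fin n)} (hX : X ⊆ J) (t : ℕ) :
    OPT p w d J t ≤ OPT p w d X t + OPT p w d (J \ X) (t + ∑ k ∈ X, p k) := by
  by_cases h₁ : OPT p w d X t = ⊤
  · simp [h₁]
  by_cases h₂ : OPT p w d (J \ X) (t + ∑ k ∈ X, p k) = ⊤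
  · simp [h₂]
  obtain ⟨l₁, hn₁, rfl, hd₁, hc₁⟩ := exists_wcCost_eq_OPT h₁
  obtain ⟨l₂, hn₂, hl₂, hd₂, hc₂⟩ := exists_wcCost_eq_OPT h₂
  rw [hc₁, hc₂]
  rw [List.sum_toFinset p hn₁] at hd₂ ⊢
  have hdisj : List.Disjoint l₁ l₂ := by
    rw [← List.disjoint_toFinset_iff_disjoint, hl₂]
    exact Finset.disjoint_sdiff
  have hJ : (l₁ ++ l₂).toFinset = J := by
    rw [List.toFinset_append, hl₂, Finset.union_sdiff_of_subset hX]
  have h := OPT_le_wcCost p w d (hn₁.append hn₂ hdisj)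
    ((deadlineFeasible_append p d t l₁ l₂).2 ⟨hd₁, hd₂⟩)
  rwa [hJ, wcCost_append, Nat.cast_add] at h

/-- Splitting a feasible ordering into two blocks. -/
theorem OPT_add_OPT_le_wcCost_append {n : ℕ} (p w d : Fin n → ℕ) {t : ℕ} {l₁ l₂ : List (Fin n)}
    (hn : (l₁ ++ l₂).Nodup) (hd : deadlineFeasible p d t (l₁ ++ l₂)) :
    OPT p w d l₁.toFinset t +
        OPT p w d ((l₁ ++ l₂).toFinset \ l₁.toFinset) (t + ∑ k ∈ l₁.toFinset, p k) ≤
      wcCost p w t (l₁ ++ l₂) := by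
  obtain ⟨hn₁, hn₂, hdisj⟩ := List.nodup_append'.1 hn
  obtain ⟨hd₁, hd₂⟩ := (deadlineFeasible_append p d t l₁ l₂).1 hd
  rw [List.toFinset_append, Finset.union_sdiff_cancel_left
    (List.disjoint_toFinset_iff_disjoint.2 hdisj), List.sum_toFinset p hn₁, wcCost_append,
    Nat.cast_add]
  exact add_le_add (OPT_le_wcCost p w d hn₁ hd₁) (OPT_le_wcCost p w d hn₂ hd₂)

theorem stmt1 {n : ℕ} (p w d : Fin n → ℕ) (J : Finset (Fin n)) (hJ : Even J.card) (t : ℕ) :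
    OPT p w d J t =
      ⨅ (X : Finset (Fin n)) (_ : X ⊆ J ∧ X.card = J.card / 2),
        (OPT p w d X t + OPT p w d (J \ X) (t + ∑ k ∈ X, p k)) := by
  refine le_antisymm (le_iInf₂ fun X hX => OPT_le_add p w d hX.1 t) (le_sInf ?_)
  rintro _ ⟨l, hn, rfl, hd, rfl⟩
  obtain ⟨l₁, l₂, rfl, hlen⟩ : ∃ l₁ l₂, l = l₁ ++ l₂ ∧ l₁.length = l.length / 2 :=
    ⟨l.take (l.length / 2), l.drop (l.length / 2), (List.take_append_drop _ _).symm, by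
      rw [List.length_take]; omega⟩
  refine iInf₂_le_of_le l₁.toFinset ⟨?_, ?_⟩ (OPT_add_OPT_le_wcCost_append p w d hn hd)
  · rw [List.toFinset_append]
    exact Finset.subset_union_left
  · rw [List.toFinset_card_of_nodup hn, List.toFinset_card_of_nodup hn.of_append_left, hlen]
end

section
/- Let n ≥ 1 jobs be given for the 3-machine permutation flowshop with integer processing times p_{ij} ∈ ℕ for i ∈ {1,2,3}, j ∈ {1,…,n}, with P = max_{i,j} p_{ij} > 0, and let ε > 0 be a real number. Set K = εP/(n+2) and p'_{ij} = ⌈p_{ij}/K⌉ for all i, j. Let π* be a permutation minimizing the makespan C_max for the processing times p_{ij}, and let π' be a permutation minimizing the makespan C'_max for the processing times p'_{ij}. Then C_max(π') ≤ (1+ε)·C_max(π*). -/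
/-- Completion times of the 3-machine (more generally `m`-machine) permutation
flowshop : `fsC q π i k` is the completion time `C(i,k)` of the `k`-th scheduled
job (1-based) on machine `i` (1-based), for processing times `q i j` and
permutation `π`, defined by
`C(i,k) = max (C(i-1,k)) (C(i,k-1)) + q i (π k)` with `C(0,k) = C(i,0) = 0`. -/
def fsC (q : ℕ → ℕ → ℝ) (π : ℕ → ℕ) : ℕ → ℕ → ℝ
  | 0, _ => 0
  | _ + 1, 0 => 0
  | i + 1, k + 1 =>
      max (fsC q π i (k + 1)) (fsC q π (i + 1) k) + q (i + 1) (π (k + 1))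

theorem fsC_const_mul {K : ℝ} (hK : 0 ≤ K) (q : ℕ → ℕ → ℝ) (π : ℕ → ℕ) (i k : ℕ) :
    fsC (fun i j => K * q i j) π i k = K * fsC q π i k := by
  induction i generalizing k with
  | zero => simp [fsC]
  | succ i ihi =>
    induction k with
    | zero => simp [fsC]
    | succ k ihk => simp only [fsC, ihi, ihk, mul_add, mul_max_of_nonneg _ _ hK]

/-- A critical path to position `k` on machine `i` visits at most `i + k - 1` operations. -/
theorem fsC_le_add {a b : ℕ → ℕ → ℝ} {c : ℝ} (hc : 0 ≤ c) (h : ∀ i j, b i j ≤ a i j + c)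
    (π : ℕ → ℕ) (i k : ℕ) :
    fsC b π i k ≤ fsC a π i k + c * ((i + k - 1 : ℕ) : ℝ) := by
  induction i generalizing k with
  | zero => simp only [fsC]; positivity
  | succ i ihi =>
    induction k with
    | zero => simp only [fsC]; positivity
    | succ k ihk =>
      have hi := ihi (k + 1)
      have hj := h (i + 1) (π (k + 1))
      have e₁ : i + (k + 1) - 1 = i + k := by omega
      have e₂ : i + 1 + k - 1 = i + k := by omega
      have e₃ : i + 1 + (k + 1) - 1 = i + k + 1 := by omega
      rw [e₁] at hi
      rw [e₂] at ihk
      rw [e₃]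
      simp only [fsC]
      have hmax : max (fsC b π i (k + 1)) (fsC b π (i + 1) k) ≤
          max (fsC a π i (k + 1)) (fsC a π (i + 1) k) + c * ((i + k : ℕ) : ℝ) :=
        max_le (hi.trans (by gcongr; exact le_max_left _ _))
          (ihk.trans (by gcongr; exact le_max_right _ _))
      rw [Nat.cast_succ]
      linarith

theorem fsC_nonneg {q : ℕ → ℕ → ℝ} (hq : ∀ i j, 0 ≤ q i j) (π : ℕ → ℕ) (i k : ℕ) :
    0 ≤ fsC q π i k := by
  fun_induction fsC q π i k with
  | case1 => rfl
  | case2 => rfl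
  | case3 i k ih₁ ih₂ => exact add_nonneg (ih₁.trans (le_max_left _ _)) (hq _ _)

theorem fsC_monotone_machine {q : ℕ → ℕ → ℝ} (hq : ∀ i j, 0 ≤ q i j) (π : ℕ → ℕ) (k : ℕ) :
    Monotone fun i => fsC q π i k := by
  refine monotone_nat_of_le_succ fun i => ?_
  cases k with
  | zero => cases i <;> simp [fsC]
  | succ k =>
    rw [fsC]
    exact (le_max_left _ _).trans (le_add_of_nonneg_right (hq _ _))

theorem fsC_monotone_position {q : ℕ → ℕ → ℝ} (hq : ∀ i j, 0 ≤ q i j) (π : ℕ → ℕ) (i : ℕ) :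
    Monotone fun k => fsC q π i k := by
  refine monotone_nat_of_le_succ fun k => ?_
  cases i with
  | zero => simp [fsC]
  | succ i =>
    simp only [fsC]
    exact (le_max_right _ _).trans (le_add_of_nonneg_right (hq _ _))

theorem le_fsC {q : ℕ → ℕ → ℝ} (hq : ∀ i j, 0 ≤ q i j) (π : ℕ → ℕ) {i k : ℕ}
    (hi : 1 ≤ i) (hk : 1 ≤ k) : q i (π k) ≤ fsC q π i k := by
  obtain ⟨i, rfl⟩ := Nat.exists_eq_add_of_le' hi
  obtain ⟨k, rfl⟩ := Nat.exists_eq_add_of_le' hk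
  rw [fsC]
  exact le_add_of_nonneg_left ((fsC_nonneg hq π i (k + 1)).trans (le_max_left _ _))

theorem stmt13 (n : ℕ) (hn : 1 ≤ n) (p : ℕ → ℕ → ℕ) (P : ℕ)
    (hP : P = (Finset.Icc 1 3 ×ˢ Finset.Icc 1 n).sup fun ij => p ij.1 ij.2)
    (hPpos : 0 < P) (ε : ℝ) (hε : 0 < ε) (K : ℝ) (hK : K = ε * P / (n + 2))
    (p' : ℕ → ℕ → ℝ) (hp' : ∀ i j, p' i j = (⌈(p i j : ℝ) / K⌉₊ : ℝ))
    (πstar : ℕ → ℕ) (hπstar : Set.BijOn πstar (Set.Icc 1 n) (Set.Icc 1 n))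
    (hπstarOpt : ∀ σ : ℕ → ℕ, Set.BijOn σ (Set.Icc 1 n) (Set.Icc 1 n) →
      fsC (fun i j => (p i j : ℝ)) πstar 3 n ≤ fsC (fun i j => (p i j : ℝ)) σ 3 n)
    (π' : ℕ → ℕ) (hπ' : Set.BijOn π' (Set.Icc 1 n) (Set.Icc 1 n))
    (hπ'Opt : ∀ σ : ℕ → ℕ, Set.BijOn σ (Set.Icc 1 n) (Set.Icc 1 n) →
      fsC p' π' 3 n ≤ fsC p' σ 3 n) :
    fsC (fun i j => (p i j : ℝ)) π' 3 n ≤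
      (1 + ε) * fsC (fun i j => (p i j : ℝ)) πstar 3 n := by
  have hPR : (0 : ℝ) < P := by exact_mod_cast hPpos
  have hK0 : 0 < K := by rw [hK]; positivity
  have hq : ∀ i j, (0 : ℝ) ≤ (p i j : ℝ) := fun i j => Nat.cast_nonneg _
  have hPle : (P : ℝ) ≤ fsC (fun i j => (p i j : ℝ)) πstar 3 n := by
    obtain ⟨⟨i, j⟩, hij, hmax⟩ := Finset.exists_mem_eq_sup
      (Finset.Icc 1 3 ×ˢ Finset.Icc 1 n) ⟨(1, 1), by simp [hn]⟩ fun ij => p ij.1 ij.2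
    simp only [Finset.mem_product, Finset.mem_Icc] at hij
    obtain ⟨k, hk, rfl⟩ := hπstar.surjOn (Set.mem_Icc.2 hij.2)
    rw [hP, hmax]
    exact (le_fsC hq πstar hij.1.1 hk.1).trans
      ((fsC_monotone_machine hq πstar k hij.1.2).trans (fsC_monotone_position hq πstar 3 hk.2))
  have hlower : fsC (fun i j => (p i j : ℝ)) π' 3 n ≤ K * fsC p' π' 3 n := by
    have h := fsC_le_add (a := fun i j => K * p' i j) (b := fun i j => (p i j : ℝ)) le_rfl
      (fun i j => by
        rw [hp', add_zero, ← div_le_iff₀' hK0]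
        exact Nat.le_ceil _) π' 3 n
    rwa [zero_mul, add_zero, fsC_const_mul hK0.le] at h
  have hupper : K * fsC p' πstar 3 n ≤
      fsC (fun i j => (p i j : ℝ)) πstar 3 n + K * (n + 2) := by
    have h := fsC_le_add (a := fun i j => (p i j : ℝ)) (b := fun i j => K * p' i j) hK0.le
      (fun i j => by
        have hceil := (Nat.ceil_lt_add_one (div_nonneg (hq i j) hK0.le)).le
        calc K * p' i j ≤ K * (p i j / K + 1) := by rw [hp']; gcongr
          _ = p i j + K := by field_simp) πstar 3 n
    rw [fsC_const_mul hK0.le, show 3 + n - 1 = n + 2 by omega] at h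
    exact_mod_cast h
  have hKn : K * (n + 2) = ε * P := by rw [hK]; field_simp
  calc fsC (fun i j => (p i j : ℝ)) π' 3 n ≤ K * fsC p' π' 3 n := hlower
    _ ≤ K * fsC p' πstar 3 n := by gcongr; exact hπ'Opt πstar hπstar
    _ ≤ fsC (fun i j => (p i j : ℝ)) πstar 3 n + ε * P := hKn ▸ hupper
    _ ≤ (1 + ε) * fsC (fun i j => (p i j : ℝ)) πstar 3 n := by
      rw [one_add_mul]
      gcongr
end
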